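/- arXiv:2012.09548 — 2 statements merged into one kernel-verified Lean document; each statement's English description precedes it below -/
import Mathlib

section
/- For all real numbers a, b, c, d, the number (1/(2π))·(Ψ(b−a) + Ψ(c−b) + Ψ(d−c) + Ψ(a−d)) is an integer belonging to {−1, 0, 1}. In particular, the discrete vorticity d_u(εi) of any spin field u : εℤ² → 𝕊¹ only takes the values −1, 0, 1. -/
/-- The function `Ψ : ℝ → [−π, π]`: `Ψ(t)` is the unique element of `(−π, π)` with
`t − Ψ(t) ∈ 2πℤ` when `t ∉ π + 2πℤ`, `Ψ(t) = π` when `t ∈ π + 2πℤ` and `t > 0`,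
and `Ψ(t) = −π` when `t ∈ π + 2πℤ` and `t < 0`. -/
noncomputable def Psi (t : ℝ) : ℝ :=
  if 0 ≤ t then t - 2 * Real.pi * ⌈(t - Real.pi) / (2 * Real.pi)⌉
  else t - 2 * Real.pi * ⌊(t + Real.pi) / (2 * Real.pi)⌋

/-! Since `Ψ t ≡ t` modulo `2π`, increments that add up to `0` around a closed `n`-gon give
`∑ Ψ = 2πm` with `m` an integer, and `|Ψ| ≤ π` gives only `2|m| ≤ n`. The sign convention at the
odd multiples of `π` excludes equality: `∑ Ψ = nπ` would force `Ψ = π` on every edge, whereas an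
increment that is `≤ 0`, which must occur, has `Ψ < π`. The lower bound follows by oddness of
`Ψ`. For `n = 4` this leaves `|m| ≤ 1`. -/

open Finset Real

theorem Psi_of_nonneg {t : ℝ} (ht : 0 ≤ t) : Psi t = (t : Angle).toReal := by
  have floor_arg : (-π + 2 * π - t) / (2 * π) = -((t - π) / (2 * π)) := by ring
  rw [Psi, if_pos ht, Angle.toReal_coe, toIocMod, toIocDiv_eq_neg_floor, floor_arg, Int.floor_neg,
    neg_neg, zsmul_eq_mul, mul_comm (2 * π)]

theorem Psi_of_nonpos {t : ℝ} (ht : t ≤ 0) : Psi t = -((-t : ℝ) : Angle).toReal := by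
  obtain rfl | ht := ht.eq_or_lt
  · simp [Psi_of_nonneg]
  · have ceil_arg : (-t - π) / (2 * π) = -((t + π) / (2 * π)) := by ring
    rw [← Psi_of_nonneg (neg_nonneg.2 ht.le), Psi, Psi, if_neg ht.not_ge,
      if_pos (neg_nonneg.2 ht.le), ceil_arg, Int.ceil_neg]
    push_cast
    ring

theorem Psi_neg (t : ℝ) : Psi (-t) = -Psi t := by
  obtain ht | ht := le_total 0 t
  · rw [Psi_of_nonneg ht, Psi_of_nonpos (neg_nonpos.2 ht), neg_neg]
  · rw [Psi_of_nonpos ht, Psi_of_nonneg (neg_nonneg.2 ht), neg_neg]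

theorem coe_Psi (t : ℝ) : (Psi t : Angle) = t := by
  obtain ht | ht := le_total 0 t
  · rw [Psi_of_nonneg ht, Angle.coe_toReal]
  · rw [Psi_of_nonpos ht, Angle.coe_neg, Angle.coe_toReal, Angle.coe_neg, neg_neg]

theorem Psi_lt_pi_of_nonpos {t : ℝ} (ht : t ≤ 0) : Psi t < π := by
  rw [Psi_of_nonpos ht]
  exact neg_lt.1 (Angle.neg_pi_lt_toReal _)

theorem Psi_le_pi (t : ℝ) : Psi t ≤ π := by
  obtain ht | ht := le_total 0 t
  · exact (Psi_of_nonneg ht).trans_le (Angle.toReal_le_pi _)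
  · exact (Psi_lt_pi_of_nonpos ht).le

section Sum

variable {ι : Type*} {s : Finset ι} {t : ι → ℝ}

theorem sum_Psi_lt_card_mul_pi (hs : s.Nonempty) (ht : ∑ i ∈ s, t i ≤ 0) :
    ∑ i ∈ s, Psi (t i) < #s * π := by
  obtain ⟨i, hi, hti⟩ : ∃ i ∈ s, t i ≤ 0 := exists_le_of_sum_le hs (by simpa using ht)
  calc ∑ i ∈ s, Psi (t i)
      < ∑ _i ∈ s, π := sum_lt_sum (fun j _ ↦ Psi_le_pi (t j)) ⟨i, hi, Psi_lt_pi_of_nonpos hti⟩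
    _ = #s * π := by rw [sum_const, nsmul_eq_mul]

theorem abs_sum_Psi_lt_card_mul_pi (hs : s.Nonempty) (ht : ∑ i ∈ s, t i = 0) :
    |∑ i ∈ s, Psi (t i)| < #s * π := by
  have neg_sum_lt : ∑ i ∈ s, Psi (-t i) < #s * π :=
    sum_Psi_lt_card_mul_pi hs (by rw [sum_neg_distrib, ht, neg_zero])
  simp only [Psi_neg, sum_neg_distrib] at neg_sum_lt
  exact abs_lt.2 ⟨neg_lt.1 neg_sum_lt, sum_Psi_lt_card_mul_pi hs ht.le⟩

theorem exists_sum_Psi_eq_int_mul_two_pi (ht : ∑ i ∈ s, t i = 0) :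
    ∃ m : ℤ, ∑ i ∈ s, Psi (t i) = m * (2 * π) := by
  have coe_sum : ((∑ i ∈ s, Psi (t i) : ℝ) : Angle) = 0 := calc
    ((∑ i ∈ s, Psi (t i) : ℝ) : Angle) = ∑ i ∈ s, (Psi (t i) : Angle) := map_sum Angle.coeHom _ _
    _ = ∑ i ∈ s, (t i : Angle) := by simp only [coe_Psi]
    _ = ((∑ i ∈ s, t i : ℝ) : Angle) := (map_sum Angle.coeHom _ _).symm
    _ = 0 := by rw [ht, Angle.coe_zero]
  obtain ⟨m, hm⟩ := Angle.coe_eq_zero_iff.1 coe_sum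
  exact ⟨m, by rw [← hm, zsmul_eq_mul]⟩

theorem discrete_vorticity_mem_general (hs : s.Nonempty) (ht : ∑ i ∈ s, t i = 0) :
    1 / (2 * π) * ∑ i ∈ s, Psi (t i) ∈ ((↑) : ℤ → ℝ) '' {m | 2 * |m| < #s} := by
  obtain ⟨m, hm⟩ := exists_sum_Psi_eq_int_mul_two_pi ht
  refine ⟨m, ?_, by rw [hm]; field_simp⟩
  have abs_mul_lt : (2 * |(m : ℝ)|) * π < #s * π := calc
    (2 * |(m : ℝ)|) * π = |∑ i ∈ s, Psi (t i)| := by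
      rw [hm, abs_mul, abs_of_pos two_pi_pos]; ring
    _ < #s * π := abs_sum_Psi_lt_card_mul_pi hs ht
  exact_mod_cast lt_of_mul_lt_mul_right abs_mul_lt pi_pos.le

end Sum

theorem setOf_two_mul_abs_lt_four : {m : ℤ | 2 * |m| < 4} = {-1, 0, 1} := by
  ext m
  grind

/-- For all real `a, b, c, d`, the number
`(1/(2π))·(Ψ(b−a) + Ψ(c−b) + Ψ(d−c) + Ψ(a−d))` is an integer belonging to `{−1, 0, 1}`;
hence the discrete vorticity of a spin field only takes the values `−1, 0, 1`. -/
theorem discrete_vorticity_mem (a b c d : ℝ) :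
    (1 / (2 * Real.pi)) * (Psi (b - a) + Psi (c - b) + Psi (d - c) + Psi (a - d)) ∈
      ({-1, 0, 1} : Set ℝ) := by
  have closed : ∑ i, ![b - a, c - b, d - c, a - d] i = 0 := by simp [Fin.sum_univ_four]
  simpa [Fin.sum_univ_four, setOf_two_mul_abs_lt_four, Set.image_insert_eq] using
    discrete_vorticity_mem_general univ_nonempty closed
end

section
/- For every σ ∈ (0,1) there exists θ₀ > 0 such that for every θ ∈ (0, θ₀) and all u, v ∈ 𝕊¹ whose geodesic distance d_{𝕊¹}(u,v) is a nonnegative integer multiple of θ, one has ‖u − v‖² ≥ (1 − σ)·θ·d_{𝕊¹}(u,v). -/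
open scoped RealInnerProductSpace

noncomputable abbrev E2 := EuclideanSpace ℝ (Fin 2)

/-- Geodesic distance on the unit circle `𝕊¹ ⊂ ℝ²`. -/
noncomputable def dS1 (u v : E2) : ℝ := Real.arccos ⟪u, v⟫

/-!
For unit vectors at angle `d` one has `‖u - v‖ ^ 2 = 2 - 2 * cos d ≥ (d - d ^ 3 / 12) * d`.
The cubic `t - t ^ 3 / 12` eventually decreases, but it is still above `1 / 2` at `π`; hence for
`θ ≤ 1 / 2` its minimum over `[θ, π]` is attained at `θ`, and `‖u - v‖ ^ 2 ≥ (θ - θ ^ 3 / 12) * d`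
whenever `d ≥ θ`. All that matters about a multiple of `θ` is that it is `0` or at least `θ`.
-/

open InnerProductGeometry

theorem sq_sub_pow_four_div_three_le_sin_sq (x : ℝ) : x ^ 2 - x ^ 4 / 3 ≤ Real.sin x ^ 2 := by
  have h_sub : |x| - |Real.sin x| ≤ |x| ^ 3 / 6 :=
    (abs_sub_abs_le_abs_sub _ _).trans (Real.abs_sub_sin_le x)
  have h_add : |x| + |Real.sin x| ≤ 2 * |x| := by linarith [Real.abs_sin_le_abs (x := x)]
  have h_diff : x ^ 2 - Real.sin x ^ 2 ≤ x ^ 4 / 3 := calc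
    x ^ 2 - Real.sin x ^ 2 = (|x| - |Real.sin x|) * (|x| + |Real.sin x|) := by
      rw [← sq_abs x, ← sq_abs (Real.sin x)]; ring
    _ ≤ |x| ^ 3 / 6 * (2 * |x|) := by gcongr
    _ = |x| ^ 4 / 3 := by ring
    _ = x ^ 4 / 3 := by rw [Even.pow_abs (by decide)]
  linarith

theorem cos_le_one_sub_sq_div_two_add_pow_four (x : ℝ) :
    Real.cos x ≤ 1 - x ^ 2 / 2 + x ^ 4 / 24 := by
  have h_cos : Real.cos x = 1 - 2 * Real.sin (x / 2) ^ 2 := by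
    rw [← Real.cos_two_mul_eq_one_sub, mul_div_cancel₀ x two_ne_zero]
  linarith [sq_sub_pow_four_div_three_le_sin_sq (x / 2)]

theorem sub_cube_div_twelve_le_sub_cube_div_twelve {K : Type*} [Field K] [LinearOrder K]
    [IsStrictOrderedRing K] {a b : K} (hab : a ≤ b) (h : a ^ 2 + a * b + b ^ 2 ≤ 12) :
    a - a ^ 3 / 12 ≤ b - b ^ 3 / 12 := by
  have h_factor : 0 ≤ (b - a) * (12 - (a ^ 2 + a * b + b ^ 2)) :=
    mul_nonneg (sub_nonneg.2 hab) (sub_nonneg.2 h)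
  linarith

theorem sub_cube_div_twelve_le_of_mem_Icc_pi {θ d : ℝ} (hθ₀ : 0 ≤ θ) (hθ : θ ≤ 1 / 2)
    (hd : d ∈ Set.Icc θ Real.pi) : θ - θ ^ 3 / 12 ≤ d - d ^ 3 / 12 := by
  have hd_le : d ≤ 3.15 := hd.2.trans Real.pi_lt_d2.le
  have hd_nonneg : 0 ≤ d := hθ₀.trans hd.1
  apply sub_cube_div_twelve_le_sub_cube_div_twelve hd.1
  calc θ ^ 2 + θ * d + d ^ 2 ≤ (1 / 2) ^ 2 + 1 / 2 * 3.15 + 3.15 ^ 2 := by gcongr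
    _ ≤ 12 := by norm_num

theorem eq_zero_or_le_of_eq_natCast_mul {R : Type*} [Semiring R] [PartialOrder R]
    [IsStrictOrderedRing R] {θ d : R} (hθ : 0 ≤ θ) {k : ℕ} (hd : d = k * θ) : d = 0 ∨ θ ≤ d := by
  obtain rfl | hk := k.eq_zero_or_pos
  · left
    rw [hd, Nat.cast_zero, zero_mul]
  · right
    exact hd ▸ le_mul_of_one_le_left hθ (Nat.one_le_cast.2 hk)

section

variable {V : Type*} [NormedAddCommGroup V] [InnerProductSpace ℝ V] {u v : V}

theorem norm_sub_sq_eq_two_sub_two_mul_cos_angle (hu : ‖u‖ = 1) (hv : ‖v‖ = 1) :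
    ‖u - v‖ ^ 2 = 2 - 2 * Real.cos (angle u v) := by
  rw [norm_sub_sq_real, inner_eq_cos_angle_of_norm_eq_one hu hv, hu, hv]
  ring

theorem angle_sub_cube_mul_angle_le_norm_sub_sq (hu : ‖u‖ = 1) (hv : ‖v‖ = 1) :
    (angle u v - angle u v ^ 3 / 12) * angle u v ≤ ‖u - v‖ ^ 2 := by
  rw [norm_sub_sq_eq_two_sub_two_mul_cos_angle hu hv]
  linarith [cos_le_one_sub_sq_div_two_add_pow_four (angle u v)]

theorem mul_angle_le_norm_sub_sq_of_angle_eq_zero_or_le {θ : ℝ} (hθ₀ : 0 ≤ θ) (hθ : θ ≤ 1 / 2)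
    (hu : ‖u‖ = 1) (hv : ‖v‖ = 1) (h : angle u v = 0 ∨ θ ≤ angle u v) :
    (1 - θ ^ 2 / 12) * θ * angle u v ≤ ‖u - v‖ ^ 2 := by
  obtain h_zero | h_le := h
  · rw [h_zero, mul_zero]
    positivity
  calc (1 - θ ^ 2 / 12) * θ * angle u v = (θ - θ ^ 3 / 12) * angle u v := by ring
    _ ≤ (angle u v - angle u v ^ 3 / 12) * angle u v :=
      mul_le_mul_of_nonneg_right
        (sub_cube_div_twelve_le_of_mem_Icc_pi hθ₀ hθ ⟨h_le, angle_le_pi u v⟩) (angle_nonneg u v)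
    _ ≤ ‖u - v‖ ^ 2 := angle_sub_cube_mul_angle_le_norm_sub_sq hu hv

variable (V) in
theorem clock_energy_geodesic_lower_bound_general {σ : ℝ} (hσ : 0 < σ) :
    ∃ θ₀ : ℝ, 0 < θ₀ ∧ ∀ θ : ℝ, θ ∈ Set.Ioo 0 θ₀ →
      ∀ u v : V, ‖u‖ = 1 → ‖v‖ = 1 → (angle u v = 0 ∨ θ ≤ angle u v) →
        (1 - σ) * θ * angle u v ≤ ‖u - v‖ ^ 2 := by
  refine ⟨min σ (1 / 2), lt_min hσ one_half_pos, ?_⟩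
  rintro θ ⟨hθ₀, hθ⟩ u v hu hv h
  obtain ⟨hθσ, hθ_half⟩ := lt_min_iff.1 hθ
  have h_coeff : 1 - σ ≤ 1 - θ ^ 2 / 12 := by nlinarith
  calc (1 - σ) * θ * angle u v ≤ (1 - θ ^ 2 / 12) * θ * angle u v := by
        gcongr
        exact angle_nonneg u v
    _ ≤ ‖u - v‖ ^ 2 := mul_angle_le_norm_sub_sq_of_angle_eq_zero_or_le hθ₀.le hθ_half.le hu hv h

end

theorem dS1_eq_angle {u v : E2} (hu : ‖u‖ = 1) (hv : ‖v‖ = 1) : dS1 u v = angle u v := by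
  rw [dS1, angle, hu, hv, one_mul, div_one]

/-- For every `σ ∈ (0,1)` there is `θ₀ > 0` such that for every `θ ∈ (0,θ₀)` and all
`u, v ∈ 𝕊¹` whose geodesic distance is a nonnegative integer multiple of `θ`, one has
`‖u − v‖² ≥ (1 − σ)·θ·d_{𝕊¹}(u,v)`. -/
theorem clock_energy_geodesic_lower_bound (σ : ℝ) (hσ : σ ∈ Set.Ioo (0 : ℝ) 1) :
    ∃ θ₀ : ℝ, 0 < θ₀ ∧ ∀ θ : ℝ, θ ∈ Set.Ioo 0 θ₀ →
      ∀ u v : E2, ‖u‖ = 1 → ‖v‖ = 1 → (∃ k : ℕ, dS1 u v = (k : ℝ) * θ) →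
        (1 - σ) * θ * dS1 u v ≤ ‖u - v‖ ^ 2 := by
  obtain ⟨θ₀, hθ₀, h_bound⟩ := clock_energy_geodesic_lower_bound_general E2 hσ.1
  refine ⟨θ₀, hθ₀, fun θ hθ u v hu hv ⟨k, hk⟩ ↦ ?_⟩
  rw [dS1_eq_angle hu hv] at hk ⊢
  exact h_bound θ hθ u v hu hv (eq_zero_or_le_of_eq_natCast_mul hθ.1.le hk)
end
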